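/- arXiv:2510.20938 — 2 statements merged into one kernel-verified Lean document; each statement's English description precedes it below -/
import Mathlib

section
/- Let f : M → M be a local homeomorphism of a compact metric space M with dense preorbits satisfying (H1), let φ : M → ℝ be continuous satisfying (H2), and let ν be a reference measure for (f,φ). For j ∈ ℕ let G_j be the set of points having j as a Gibbs time, and define η_n = (1/n) Σ_{j=0}^{n-1} f^j_*(ν|_{G_j}). Then for each n ∈ ℕ the measure η_n is absolutely continuous with respect to ν. -/
open MeasureTheory Set Filter Topology
open scoped ENNReal NNReal

noncomputable section

namespace PaperWG

variable {X : Type*}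

section Dyn

variable [MetricSpace X]

/-- The dynamical ball `B_ε(x,n) = {y : d(T^j x, T^j y) < ε for all 0 ≤ j ≤ n}`. -/
def dynBall (T : X → X) (x : X) (n : ℕ) (ε : ℝ) : Set X :=
  {y | ∀ j ≤ n, dist (T^[j] x) (T^[j] y) < ε}

/-- Birkhoff sum `S_n φ(x) = ∑_{j=0}^{n-1} φ(T^j x)`. -/
def birkhoff (T : X → X) (φ : X → ℝ) (n : ℕ) (x : X) : ℝ :=
  ∑ j ∈ Finset.range n, φ (T^[j] x)

/-- `R_{n,ε}φ(x) = sup_{y ∈ B_ε(x,n)} S_n φ(y)`. -/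
def rSup (T : X → X) (φ : X → ℝ) (n : ℕ) (ε : ℝ) (x : X) : ℝ :=
  sSup (birkhoff T φ n '' dynBall T x n ε)

/-- `m_T(φ,Λ,ε,N,γ)`: infimum over countable covers of `Λ` by dynamical balls with
time at least `N` of `∑ exp(-γ n + R_{n,ε}φ(x))`. -/
def mPre (T : X → X) (φ : X → ℝ) (Λ : Set X) (ε : ℝ) (N : ℕ) (γ : ℝ) : ℝ≥0∞ :=
  ⨅ (U : Set (X × ℕ)) (_ : U.Countable) (_ : ∀ p ∈ U, N ≤ p.2)
    (_ : Λ ⊆ ⋃ p ∈ U, dynBall T p.1 p.2 ε),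
    ∑' p : U, ENNReal.ofReal (Real.exp (-γ * (p.1.2 : ℝ) + rSup T φ p.1.2 ε p.1.1))

/-- `m_T(φ,Λ,ε,γ) = lim_{N→∞} m_T(φ,Λ,ε,N,γ)`; the quantity is nondecreasing in `N`,
so the limit is the supremum. -/
def mRel (T : X → X) (φ : X → ℝ) (Λ : Set X) (ε γ : ℝ) : ℝ≥0∞ :=
  ⨆ N : ℕ, mPre T φ Λ ε N γ

/-- `P_T(φ,Λ,ε) = inf {γ : m_T(φ,Λ,ε,γ) = 0}`. -/
def presRelEps (T : X → X) (φ : X → ℝ) (Λ : Set X) (ε : ℝ) : ℝ :=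
  sInf {γ : ℝ | mRel T φ Λ ε γ = 0}

/-- The relative topological pressure `P_T(φ,Λ) = lim_{ε→0} P_T(φ,Λ,ε)`; the quantity is
nonincreasing in `ε`, so the limit is the supremum over `ε > 0`. -/
def presRel (T : X → X) (φ : X → ℝ) (Λ : Set X) : ℝ :=
  ⨆ ε : {e : ℝ // 0 < e}, presRelEps T φ Λ ε.1

/-- The topological pressure `P_T(φ) = P_T(φ, X)`. -/
def pres (T : X → X) (φ : X → ℝ) : ℝ :=
  presRel T φ Set.univ

/-- `g` maps `A` homeomorphically onto `B`. -/
def MapsHomeomorphicallyOnto (g : X → X) (A B : Set X) : Prop :=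
  g '' A = B ∧ ∃ e : A ≃ₜ B, ∀ a : A, (e a : X) = g a

/-- Condition (*): `n ≥ 1` is a Gibbs time for `x` when `f^n` maps the dynamical ball
`B_ε(x,n)` homeomorphically onto the ball `B(f^n x, ε)` for every `0 < ε < δ₀`. -/
def IsGibbsTime (f : X → X) (δ₀ : ℝ) (x : X) (n : ℕ) : Prop :=
  1 ≤ n ∧ ∀ ε : ℝ, 0 < ε → ε < δ₀ →
    MapsHomeomorphicallyOnto (f^[n]) (dynBall f x n ε) (Metric.ball (f^[n] x) ε)

/-- The set `G` of Hypothesis (H1): points whose frequency of Gibbs times is at least `θ`. -/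
def gibbsSet (f : X → X) (δ₀ θ : ℝ) : Set X :=
  {x | θ ≤ Filter.atTop.limsup
    (fun n : ℕ => ((Set.Icc 1 n ∩ {j | IsGibbsTime f δ₀ x j}).ncard : ℝ) / n)}

/-- Every preorbit `⋃_{j≥0} f^{-j}(x)` is dense. -/
def DensePreorbits (f : X → X) : Prop :=
  ∀ x : X, Dense (⋃ n : ℕ, f^[n] ⁻¹' {x})

/-- Hypothesis (H2): Bowen property of `φ` on `G` at Gibbs times. -/
def BowenOnGibbs (f : X → X) (φ : X → ℝ) (δ₀ : ℝ) (G : Set X) : Prop :=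
  ∃ V > 0, ∃ ε > 0, ∀ x ∈ G, ∀ n : ℕ, IsGibbsTime f δ₀ x n →
    ∀ y ∈ dynBall f x n ε, ∀ z ∈ dynBall f x n ε,
      |∑ i ∈ Finset.range (n + 1), (φ (f^[i] y) - φ (f^[i] z))| ≤ V

/-- Bowen property of `φ` on a set `S` at all times (Hypothesis (H4)). -/
def BowenOn (T : X → X) (φ : X → ℝ) (S : Set X) : Prop :=
  ∃ ε > 0, ∃ V > 0, ∀ x ∈ S, ∀ n : ℕ,
    ∀ y ∈ dynBall T x n ε, ∀ z ∈ dynBall T x n ε,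
      |∑ j ∈ Finset.range (n + 1), (φ (T^[j] y) - φ (T^[j] z))| ≤ V

/-- Hypotheses (H3)/(H5): the topological pressure is located on `S`:
`P_T(φ, Sᶜ) < P_T(φ, S) = P_T(φ)`. -/
def PressureLocatedOn (T : X → X) (φ : X → ℝ) (S : Set X) : Prop :=
  presRel T φ Sᶜ < presRel T φ S ∧ presRel T φ S = pres T φ

end Dyn

section Meas

variable [MetricSpace X] [MeasurableSpace X]

/-- `μ` is a weak Gibbs measure for `(T,φ)` with constant `P`. -/
def IsWeakGibbs (T : X → X) (φ : X → ℝ) (μ : Measure X) (P : ℝ) : Prop :=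
  ∃ δ > 0, ∀ ε : ℝ, 0 < ε → ε ≤ δ → ∃ K > 0,
    ∀ᵐ x ∂μ, ∃ nk : ℕ → ℕ, StrictMono nk ∧
      ∀ k : ℕ, ∀ y ∈ dynBall T x (nk k) ε,
        ENNReal.ofReal (K⁻¹ * Real.exp (birkhoff T φ (nk k) y - (nk k : ℝ) * P))
            ≤ μ (dynBall T x (nk k) ε) ∧
          μ (dynBall T x (nk k) ε)
            ≤ ENNReal.ofReal (K * Real.exp (birkhoff T φ (nk k) y - (nk k : ℝ) * P))

/-- The Ruelle–Perron–Frobenius transfer operator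
`L_{f,φ} ψ (x) = ∑_{y ∈ f⁻¹(x)} e^{φ(y)} ψ(y)`. -/
def transferOp (f : X → X) (φ ψ : X → ℝ) (x : X) : ℝ :=
  ∑' y : (f ⁻¹' {x} : Set X), Real.exp (φ y) * ψ y

/-- A reference measure for `(f,φ)`: a Borel probability measure `ν` with
`L*_{f,φ} ν = λ ν`. -/
def IsReferenceMeasure (f : X → X) (φ : X → ℝ) (ν : Measure X) (lam : ℝ) : Prop :=
  IsProbabilityMeasure ν ∧ 0 < lam ∧
    ∀ ψ : X → ℝ, Continuous ψ →
      ∫ x, transferOp f φ ψ x ∂ν = lam * ∫ x, ψ x ∂ν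

end Meas

section Entropy

variable [MeasurableSpace X]

/-- Entropy of the finite partition of `X` by the fibers of `P`. -/
def partEntropy (μ : Measure X) {α : Type} [Fintype α] (P : X → α) : ℝ :=
  ∑ a : α, Real.negMulLog ((μ (P ⁻¹' {a})).toReal)

/-- Kolmogorov–Sinai entropy of `μ` with respect to the partition given by `P`. -/
def entropyWrt (T : X → X) (μ : Measure X) {k : ℕ} (P : X → Fin k) : ℝ :=
  Filter.atTop.liminf fun n : ℕ =>
    partEntropy μ (fun x => fun j : Fin n => P (T^[(j : ℕ)] x)) / n

/-- Kolmogorov–Sinai (metric) entropy of `μ`: supremum over finite measurable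
partitions of the entropy of `T` with respect to the partition. -/
def metricEntropy (T : X → X) (μ : Measure X) : ℝ :=
  ⨆ p : Σ k : ℕ, {P : X → Fin k // Measurable P}, entropyWrt T μ p.2.1

end Entropy

section Equi

variable [MetricSpace X] [MeasurableSpace X]

/-- `μ` is an equilibrium state for `(T,φ)`: it is `T`-invariant and attains the
supremum of `η ↦ h_η(T) + ∫ φ dη` over all `T`-invariant Borel probability measures. -/
def IsEquilibriumState (T : X → X) (φ : X → ℝ) (μ : Measure X) : Prop :=
  IsProbabilityMeasure μ ∧ Measure.map T μ = μ ∧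
    ∀ η : Measure X, IsProbabilityMeasure η → Measure.map T η = η →
      metricEntropy T η + ∫ x, φ x ∂η ≤ metricEntropy T μ + ∫ x, φ x ∂μ

/-- A generating partition for `G`: a countable measurable partition of `G` with finite
entropy whose iterates under `f` generate the Borel σ-algebra of `G` (in the sense that
every measurable set agrees on `G` with a set in the σ-algebra generated by the cylinders). -/
structure GeneratingPartition (f : X → X) (G : Set X) : Type _ where
  part : ℕ → Set X
  measurable : ∀ i, MeasurableSet (part i)
  disj : Pairwise (Function.onFun Disjoint part)
  cover : G = ⋃ i, part i
  finiteEntropy : ∀ μ : Measure X, IsProbabilityMeasure μ →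
    Summable fun i => Real.negMulLog ((μ (part i)).toReal)
  generates : ∀ B : Set X, MeasurableSet B →
    ∃ B' : Set X,
      MeasurableSet[MeasurableSpace.generateFrom
        {s : Set X | ∃ (n : ℕ) (a : Fin n → ℕ), s = ⋂ j : Fin n, f^[(j : ℕ)] ⁻¹' part (a j)}] B' ∧
      B ∩ G = B' ∩ G

end Equi

end PaperWG

namespace PaperWG

/-- The push-forward of a reference measure is absolutely continuous. -/
theorem map_ac_of_reference
    {M : Type*} [MetricSpace M] [CompactSpace M] [MeasurableSpace M] [BorelSpace M]
    (f : M → M) (hf : Continuous f) (φ : M → ℝ)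
    (ν : Measure M) (lam : ℝ) (href : IsReferenceMeasure f φ ν lam) :
    Measure.map f ν ≪ ν := by
  obtain ⟨hprob, hlam, hint⟩ := href
  set h : M → ℝ := transferOp f φ (fun _ => 1) with hh
  have h0 : ∀ x, 0 ≤ h x := fun x => tsum_nonneg fun y => by positivity
  have h1 : ∫ x, h x ∂ν = lam := by simpa using hint (fun _ => 1) continuous_const
  have hi : Integrable h ν := by
    by_contra hn
    rw [integral_undef hn] at h1
    exact hlam.ne h1
  have key : ∀ g : M → ℝ, Continuous g → ∫ x, h x * g x ∂ν = lam * ∫ x, g (f x) ∂ν := by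
    intro g hg
    rw [← hint (fun x => g (f x)) (hg.comp hf)]
    congr 1
    ext x
    simp only [hh, transferOp]
    rw [← tsum_mul_right]
    refine tsum_congr fun y => ?_
    have : f y = x := y.2
    rw [this, mul_one]
  have hmeas : AEMeasurable (fun x => ENNReal.ofReal (h x)) ν := hi.aemeasurable.ennreal_ofReal
  have : IsFiniteMeasure (ν.withDensity fun x => ENNReal.ofReal (h x)) :=
    isFiniteMeasure_withDensity_ofReal hi.2
  have : IsFiniteMeasure (ENNReal.ofReal lam • Measure.map f ν) :=
    Measure.smul_finite _ ENNReal.ofReal_ne_top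
  have heq : (ν.withDensity fun x => ENNReal.ofReal (h x)) = ENNReal.ofReal lam • Measure.map f ν := by
    refine ext_of_forall_integral_eq_of_IsFiniteMeasure fun g => ?_
    rw [integral_withDensity_eq_integral_toReal_smul₀ hmeas (by simp), integral_smul_measure,
      integral_map hf.aemeasurable g.continuous.aestronglyMeasurable,
      ENNReal.toReal_ofReal hlam.le, smul_eq_mul, ← key g g.continuous]
    simp [ENNReal.toReal_ofReal (h0 _)]
  have hac : ENNReal.ofReal lam • Measure.map f ν ≪ ν :=
    heq ▸ withDensity_absolutelyContinuous _ _
  refine Measure.AbsolutelyContinuous.mk fun s _ hs => ?_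
  have := hac hs
  simpa [hlam.not_ge] using this

/-- Lemma: each Cesàro average `η_n = (1/n) ∑_{j<n} f^j_*(ν|_{G_j})` is absolutely
continuous with respect to the reference measure `ν`. -/
theorem etaN_absolutelyContinuous
    {M : Type*} [MetricSpace M] [CompactSpace M] [MeasurableSpace M] [BorelSpace M]
    (f : M → M) (hf : IsLocalHomeomorph f) (hdense : DensePreorbits f)
    (δ₀ : ℝ) (hδ₀ : 0 < δ₀) (θ : ℝ) (hθ : 0 < θ)
    (G : Set M) (hG : G = gibbsSet f δ₀ θ)
    (φ : M → ℝ) (hφ : Continuous φ)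
    (hH2 : BowenOnGibbs f φ δ₀ G)
    (ν : Measure M) (lam : ℝ) (href : IsReferenceMeasure f φ ν lam) :
    ∀ n : ℕ,
      ((n : ℝ≥0∞)⁻¹ • ∑ j ∈ Finset.range n,
        Measure.map (f^[j]) (ν.restrict {x | IsGibbsTime f δ₀ x j})) ≪ ν := by
  have hac := map_ac_of_reference f hf.continuous φ ν lam href
  have hc := hf.continuous
  have hj : ∀ j : ℕ, Measure.map (f^[j]) ν ≪ ν := by
    intro j
    induction j with
    | zero => simp [Measure.map_id, Measure.AbsolutelyContinuous.refl]
    | succ k ih =>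
      rw [Function.iterate_succ, ← Measure.map_map (hc.iterate k).measurable hc.measurable]
      exact (hac.map (hc.iterate k).measurable).trans ih
  intro n
  refine Measure.AbsolutelyContinuous.mk fun s _ hs => ?_
  rw [Measure.smul_apply, Measure.finsetSum_apply, Finset.sum_eq_zero, smul_zero]
  intro j _
  exact ((Measure.absolutelyContinuous_of_le Measure.restrict_le_self).map
    (hc.iterate j).measurable).trans (hj j) hs

end PaperWG
end
end

section
/- Let f : M → M be a local homeomorphism of a compact metric space M with dense preorbits satisfying (H1), let φ : M → ℝ be continuous satisfying (H2) and (H3), and suppose the sequence of Gibbs times of every x ∈ G is non-lacunar. Let μ_φ be the ergodic weak Gibbs measure (equilibrium state) of (f,φ). Then for every continuous ψ : M → ℝ, every c ∈ ℝ, and every ergodic f-invariant Borel probability measure η with η(G) = 1 and ∫ψ dη > c, one has liminf_{n→∞} (1/n) log μ_φ({x ∈ M : (1/n) Σ_{j=0}^{n-1} ψ(f^j(x)) > c}) ≥ h_η(f) + ∫φ dη − P_f(φ). -/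
open MeasureTheory Set Filter Topology
open scoped ENNReal NNReal

noncomputable section

namespace PaperWG

lemma aux_koopman_iter {M : Type*} [MeasurableSpace M] (f : M → M) (η : Measure M)
    (hf : MeasurePreserving f η η) (g : Lp ℝ 2 η) (j : ℕ) :
    (((Lp.compMeasurePreservingₗᵢ ℝ f hf).toContinuousLinearMap : Lp ℝ 2 η →L[ℝ] Lp ℝ 2 η)^[j] g : Lp ℝ 2 η)
      =ᵐ[η] fun x => g (f^[j] x) := by
  induction j with
  | zero => simp
  | succ j ih =>
    rw [Function.iterate_succ_apply']
    have h1 := Lp.coeFn_compMeasurePreserving (((Lp.compMeasurePreservingₗᵢ ℝ f hf).toContinuousLinearMap : Lp ℝ 2 η →L[ℝ] Lp ℝ 2 η)^[j] g) hf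
    have h2 := hf.quasiMeasurePreserving.ae_eq_comp ih
    refine (h1.trans h2).trans ?_
    filter_upwards with x
    simp [Function.iterate_succ_apply]

lemma aux_meanErgodic {M : Type*} [MetricSpace M] [CompactSpace M] [MeasurableSpace M]
    [BorelSpace M] (f : M → M) (η : Measure M) [IsProbabilityMeasure η] (hη : Ergodic f η)
    (ψ : M → ℝ) (hψ : Continuous ψ) (t : ℝ) (ht : 0 < t) :
    Tendsto (fun n : ℕ => η {x | birkhoff f ψ n x ≤ n * ((∫ y, ψ y ∂η) - t)}) atTop (𝓝 0) := by
  have hfp : MeasurePreserving f η η := hη.toMeasurePreserving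
  have hmem : MemLp ψ 2 η := by
    obtain ⟨C, hC⟩ := isCompact_univ.exists_bound_of_continuousOn hψ.continuousOn
    exact MemLp.of_bound hψ.aestronglyMeasurable C (Eventually.of_forall fun x => hC x (mem_univ x))
  set U : Lp ℝ 2 η →L[ℝ] Lp ℝ 2 η := (Lp.compMeasurePreservingₗᵢ ℝ f hfp).toContinuousLinearMap with hU
  have hUn : ‖U‖ ≤ 1 := LinearIsometry.norm_toContinuousLinearMap_le _
  set g : Lp ℝ 2 η := hmem.toLp ψ with hg
  have hlim := ContinuousLinearMap.tendsto_birkhoffAverage_orthogonalProjection U hUn g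
  set K := U.eqLocus (1 : Lp ℝ 2 η →L[ℝ] Lp ℝ 2 η) with hK
  set q : Lp ℝ 2 η := (K.orthogonalProjectionOnto g : Lp ℝ 2 η) with hq
  have hqK : U q = q := (K.orthogonalProjectionOnto g).2
  have hqc : ∃ a, q =ᵐ[η] Function.const M a := by
    refine hη.ae_eq_const_of_ae_eq_comp_ae (Lp.aestronglyMeasurable q) ?_
    have h1 := Lp.coeFn_compMeasurePreserving q hfp
    have h2 : Lp.compMeasurePreserving f hfp q = q := hqK
    rw [h2] at h1
    exact h1.symm
  obtain ⟨a, ha⟩ := hqc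
  have hone : MemLp (fun _ : M => (1:ℝ)) 2 η := memLp_const 1
  set o : Lp ℝ 2 η := hone.toLp _ with ho
  have hoK : o ∈ K := by
    change U o = o
    change Lp.compMeasurePreserving f hfp o = o
    rw [ho, Lp.toLp_compMeasurePreserving]
    rfl
  have hinner : inner ℝ o (g - q) = 0 := by
    have := K.sub_starProjection_mem_orthogonal g
    exact (Submodule.mem_orthogonal K _).1 this o hoK
  have haψ : a = ∫ y, ψ y ∂η := by
    rw [L2.inner_def] at hinner
    have : ∫ x, inner ℝ (o x) ((g - q : Lp ℝ 2 η) x) ∂η = ∫ x, (ψ x - a) ∂η := by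
      apply integral_congr_ae
      filter_upwards [hone.coeFn_toLp, hmem.coeFn_toLp, Lp.coeFn_sub g q, ha] with x h1 h2 h3 h4
      rw [h3, Pi.sub_apply, h4, ho, h1, hg, h2]
      simp
    rw [this, integral_sub (hmem.integrable (by norm_num)) (integrable_const _)] at hinner
    simp at hinner
    linarith
  have hav : ∀ n : ℕ, (birkhoffAverage ℝ U _root_.id n g : Lp ℝ 2 η) =ᵐ[η]
      fun x => birkhoff f ψ n x / n := by
    intro n
    rw [birkhoffAverage, birkhoffSum]
    have hit : ∀ j, (U^[j] g : Lp ℝ 2 η) =ᵐ[η] fun x => ψ (f^[j] x) := by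
      intro j
      refine (aux_koopman_iter f η hfp g j).trans ?_
      exact (hfp.iterate j).quasiMeasurePreserving.ae_eq_comp hmem.coeFn_toLp
    have hs : ∀ s : Finset ℕ, (∑ j ∈ s, _root_.id (U^[j] g) : Lp ℝ 2 η) =ᵐ[η]
        fun x => ∑ j ∈ s, ψ (f^[j] x) := by
      intro s
      induction s using Finset.cons_induction with
      | empty => exact Lp.coeFn_zero ℝ 2 η
      | cons j s hj ih =>
        simp only [Finset.sum_cons]
        refine (Lp.coeFn_add _ _).trans ?_
        filter_upwards [ih, hit j] with x h1 h2
        simp only [Pi.add_apply, id] at *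
        rw [h1, h2]
    refine (Lp.coeFn_smul _ _).trans ?_
    filter_upwards [hs (Finset.range n)] with x hx
    simp only [Pi.smul_apply, hx, birkhoff, smul_eq_mul]
    rw [div_eq_inv_mul]
  have htm : TendstoInMeasure η (fun n => ((birkhoffAverage ℝ U _root_.id n g : Lp ℝ 2 η) : M → ℝ)) atTop q := 
    tendstoInMeasure_of_tendsto_Lp hlim
  have htm2 := htm.congr hav ha
  have := (tendstoInMeasure_iff_norm.1 htm2) t ht
  refine tendsto_of_tendsto_of_tendsto_of_le_of_le' tendsto_const_nhds this
    (Eventually.of_forall fun _ => zero_le) ?_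
  filter_upwards [eventually_gt_atTop 0] with n hn
  apply measure_mono
  intro x hx
  have hn' : (0:ℝ) < n := by exact_mod_cast hn
  simp only [mem_ofPred_eq, Function.const] at hx ⊢
  rw [haψ]
  have : birkhoff f ψ n x / n ≤ (∫ y, ψ y ∂η) - t := by
    rw [div_le_iff₀ hn']; linarith
  rw [Real.norm_eq_abs, abs_sub_comm]
  exact le_trans (by linarith) (le_abs_self _)

lemma aux_hamming {n k : ℕ} (w : Fin n → Fin k) (L r : ℝ) (hL : 0 ≤ L) :
    ((Finset.univ.filter fun v : Fin n → Fin k => (hammingDist v w : ℝ) ≤ r).card : ℝ)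
      ≤ Real.exp (n * (k * Real.exp (-L)) + L * r) := by
  have h1 : ∀ v : Fin n → Fin k, ∏ j, (if v j = w j then (1:ℝ) else Real.exp (-L))
      = Real.exp (-L * hammingDist v w) := by
    intro v
    rw [Finset.prod_ite]
    simp only [Finset.prod_const_one, one_mul, Finset.prod_const, hammingDist]
    rw [← Real.exp_nat_mul]; congr 1; ring_nf
  have h2 : ∑ v : Fin n → Fin k, ∏ j, (if v j = w j then (1:ℝ) else Real.exp (-L))
      ≤ Real.exp (n * (k * Real.exp (-L))) := by
    have := Finset.prod_univ_sum (fun _ : Fin n => (Finset.univ : Finset (Fin k)))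
      (fun j a => if a = w j then (1:ℝ) else Real.exp (-L))
    rw [Fintype.piFinset_univ] at this
    rw [← this]
    have hb : ∀ j : Fin n, ∑ a : Fin k, (if a = w j then (1:ℝ) else Real.exp (-L))
        ≤ Real.exp (k * Real.exp (-L)) := by
      intro j
      have : ∑ a : Fin k, (if a = w j then (1:ℝ) else Real.exp (-L))
          ≤ ∑ a : Fin k, ((if a = w j then (1:ℝ) else 0) + Real.exp (-L)) := by
        apply Finset.sum_le_sum
        intro a _
        split_ifs <;> simp [Real.exp_nonneg]
      rw [Finset.sum_add_distrib] at this
      simp at this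
      have h3 := Real.add_one_le_exp (k * Real.exp (-L))
      linarith
    calc _ ≤ ∏ j : Fin n, Real.exp (k * Real.exp (-L)) := by
          apply Finset.prod_le_prod
          · intro j _; apply Finset.sum_nonneg; intro a _; split_ifs <;> positivity
          · intro j _; exact hb j
      _ = _ := by simp [← Real.exp_nat_mul]
  set F := Finset.univ.filter fun v : Fin n → Fin k => (hammingDist v w : ℝ) ≤ r
  have h3 : (F.card : ℝ) * Real.exp (-L * r) ≤ Real.exp (n * (k * Real.exp (-L))) := by
    refine le_trans ?_ h2
    rw [← nsmul_eq_mul, ← Finset.sum_const]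
    refine le_trans (Finset.sum_le_sum (g := fun v => ∏ j, (if v j = w j then (1:ℝ) else Real.exp (-L))) ?_) 
      (Finset.sum_le_sum_of_subset_of_nonneg (Finset.subset_univ F) ?_)
    · intro v hv
      rw [h1]
      apply Real.exp_le_exp.2
      have := (Finset.mem_filter.1 hv).2
      nlinarith
    · intro v _ _; rw [h1]; positivity
  rw [Real.exp_add]
  have h4 : Real.exp (-L * r) * Real.exp (L * r) = 1 := by rw [← Real.exp_add]; simp
  calc (F.card : ℝ) = F.card * Real.exp (-L*r) * Real.exp (L * r) := by rw [mul_assoc, h4, mul_one]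
    _ ≤ _ := by gcongr

lemma aux_entropy {α : Type} [Fintype α] (p : α → ℝ) (hp : ∀ a, 0 ≤ p a)
    (hsum : ∑ a, p a = 1) (W : Finset α) (hW : W.Nonempty) (d : ℝ)
    (hWd : 1 - d ≤ ∑ a ∈ W, p a) :
    ∑ a, Real.negMulLog (p a) ≤ Real.log W.card + d * Real.log (Fintype.card α) + 2 := by
  classical
  have key : ∀ (x L : ℝ), 0 ≤ x → Real.negMulLog x ≤ x * L + Real.exp (-L) := by
    intro x L hx
    rcases hx.eq_or_lt with h | h
    · subst h; simp [Real.exp_nonneg]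
    · have := Real.add_one_le_exp (-L - Real.log x)
      rw [Real.exp_sub, Real.exp_log h, le_div_iff₀ h] at this
      rw [Real.negMulLog]
      nlinarith
  have hα : 0 < Fintype.card α := Fintype.card_pos_iff.2 ⟨hW.choose⟩
  have hW0 : (0:ℝ) < W.card := by exact_mod_cast hW.card_pos
  have hα0 : (0:ℝ) < Fintype.card α := by exact_mod_cast hα
  rw [← Finset.sum_add_sum_compl W]
  rw [← Finset.sum_add_sum_compl W] at hsum
  have hlW : 0 ≤ Real.log W.card := Real.log_natCast_nonneg _
  have hlα : 0 ≤ Real.log (Fintype.card α) := Real.log_natCast_nonneg _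
  have e1 : ∑ a ∈ W, Real.negMulLog (p a) ≤ (∑ a ∈ W, p a) * Real.log W.card + 1 := by
    refine (Finset.sum_le_sum fun a _ => key (p a) (Real.log W.card) (hp a)).trans ?_
    rw [Finset.sum_add_distrib, ← Finset.sum_mul, Real.exp_neg, Real.exp_log hW0]
    simp [hW0.ne']
  have e2 : ∑ a ∈ Wᶜ, Real.negMulLog (p a) ≤ (∑ a ∈ Wᶜ, p a) * Real.log (Fintype.card α) + 1 := by
    refine (Finset.sum_le_sum fun a _ => key (p a) (Real.log (Fintype.card α)) (hp a)).trans ?_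
    rw [Finset.sum_add_distrib, ← Finset.sum_mul, Real.exp_neg, Real.exp_log hα0]
    simp only [Finset.sum_const, nsmul_eq_mul]
    have : (Wᶜ.card : ℝ) * (Fintype.card α : ℝ)⁻¹ ≤ 1 := by
      rw [← div_eq_mul_inv, div_le_one hα0]
      exact_mod_cast Finset.card_le_univ _
    linarith
  have h0 : 0 ≤ ∑ a ∈ Wᶜ, p a := Finset.sum_nonneg fun a _ => hp a
  have h1 : (∑ a ∈ W, p a) * Real.log W.card ≤ 1 * Real.log W.card := by
    gcongr; linarith
  have h2 : (∑ a ∈ Wᶜ, p a) * Real.log (Fintype.card α) ≤ d * Real.log (Fintype.card α) := by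
    gcongr; linarith
  linarith

lemma aux_nonlacunar {Q : ℕ → Prop} (ni : ℕ → ℕ) (hmono : StrictMono ni)
    (hQ : ∀ i, Q (ni i))
    (hl : Tendsto (fun i : ℕ => ((ni (i + 1) : ℝ) - ni i) / ni i) atTop (𝓝 0))
    (δ : ℝ) (hδ : 0 < δ) :
    ∃ N, ∀ n ≥ N, ∃ m, n ≤ m ∧ Q m ∧ (m : ℝ) ≤ (1 + δ) * n := by
  have h1 := hl.eventually (gt_mem_nhds hδ)
  obtain ⟨I, hI⟩ := eventually_atTop.1 h1
  refine ⟨ni (I + 1) + 1, fun n hn => ?_⟩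
  have hex : ∃ i, n ≤ ni i := ⟨n, hmono.id_le n⟩
  classical
  set i := Nat.find hex with hi
  have hi1 : n ≤ ni i := Nat.find_spec hex
  have hiI : I + 1 < i := by
    by_contra h
    have := hmono.monotone (not_lt.1 h)
    omega
  obtain ⟨l, hl'⟩ : ∃ l, i = l + 1 := ⟨i - 1, by omega⟩
  have hlt : ni l < n := by
    have := Nat.find_min hex (m := l) (by omega)
    omega
  refine ⟨ni i, hi1, hQ i, ?_⟩
  have := hI l (by omega)
  have hlpos : 0 < ni l := lt_of_le_of_lt (Nat.zero_le _) (hmono (show 0 < l by omega))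
  have hlpos' : (0:ℝ) < ni l := by exact_mod_cast hlpos
  rw [div_lt_iff₀ hlpos'] at this
  rw [hl']
  have hltR : (ni l : ℝ) ≤ n := by exact_mod_cast hlt.le
  nlinarith



lemma aux_compact {M : Type*} [MetricSpace M] [CompactSpace M] [MeasurableSpace M]
    [BorelSpace M] (η : Measure M) [IsProbabilityMeasure η] {k : ℕ} (P : M → Fin k)
    (hP : Measurable P) (a : ℝ≥0∞) (ha : 0 < a) :
    ∃ ε > 0, ∃ U : Set M, MeasurableSet U ∧ η U ≤ a ∧
      ∀ x y, x ∉ U → y ∉ U → dist x y < ε → P x = P y := by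
  rcases Nat.eq_zero_or_pos k with hk | hk
  · subst hk
    exact ⟨1, one_pos, ∅, MeasurableSet.empty, by simp, fun x => (P x).elim0⟩
  have hms : ∀ i, MeasurableSet (P ⁻¹' {i}) := fun i => hP (measurableSet_singleton i)
  have hak : a / k ≠ 0 := by
    simp [ENNReal.div_eq_zero_iff, ha.ne']
  have hex : ∀ i : Fin k, ∃ K ⊆ P ⁻¹' {i}, IsCompact K ∧ η (P ⁻¹' {i} \ K) < a / k := fun i =>
    (hms i).exists_isCompact_sdiff_lt (measure_ne_top _ _) hak
  choose K hKs hKc hKm using hex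
  have hev : ∀ᶠ ε in 𝓝[>] (0:ℝ), ∀ i j : Fin k, ∀ x ∈ K i, ∀ y ∈ K j, dist x y < ε → i = j := by
    rw [eventually_all]; intro i
    rw [eventually_all]; intro j
    by_cases hij : i = j
    · simp [hij]
    have hd : Disjoint (K i) (K j) := by
      rw [Set.disjoint_left]
      intro x hx hy
      exact hij ((hKs i hx).symm.trans (hKs j hy))
    obtain ⟨r, hr, hr2⟩ := Metric.exists_pos_forall_lt_edist (hKc i) (hKc j).isClosed hd
    filter_upwards [Ioo_mem_nhdsGT (show (0:ℝ) < r from by exact_mod_cast hr)] with ε hε x hx y hy hxy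
    exfalso
    have h1 := hr2 x hx y hy
    rw [edist_nndist, ENNReal.coe_lt_coe, ← NNReal.coe_lt_coe, coe_nndist] at h1
    linarith [hε.2]
  obtain ⟨ε, hε, hε0⟩ := (hev.and self_mem_nhdsWithin).exists
  refine ⟨ε, hε0, ⋃ i, (P ⁻¹' {i} \ K i), ?_, ?_, ?_⟩
  · exact MeasurableSet.iUnion fun i => (hms i).diff (hKc i).isClosed.measurableSet
  · refine (measure_iUnion_le _).trans ?_
    rw [tsum_fintype]
    refine (Finset.sum_le_sum fun i _ => (hKm i).le).trans ?_
    simp only [Finset.sum_const, Finset.card_univ, Fintype.card_fin, nsmul_eq_mul]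
    exact ENNReal.mul_div_le
  · intro x y hx hy hxy
    simp only [mem_iUnion, not_exists] at hx hy
    have hx' : x ∈ K (P x) := by
      by_contra h; exact hx (P x) ⟨rfl, h⟩
    have hy' : y ∈ K (P y) := by
      by_contra h; exact hy (P y) ⟨rfl, h⟩
    exact hε _ _ x hx' y hy' hxy

open Classical in
lemma aux_markov {M : Type*} [MeasurableSpace M] (f : M → M) (η : Measure M)
    (hf : MeasurePreserving f η η) (U : Set M) (hU : MeasurableSet U) (β : ℝ) (hβ : 0 < β)
    (d : ℝ≥0∞) (hd : η U ≤ ENNReal.ofReal β * d) (n : ℕ) (hn : 0 < n) :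
    η {x | β * n ≤ ((Finset.univ.filter fun j : Fin n => f^[(j : ℕ)] x ∈ U).card : ℝ)} ≤ d := by
  have hm : ∀ j : ℕ, MeasurableSet (f^[j] ⁻¹' U) := fun j => (hf.measurable.iterate j) hU
  have hint : ∫⁻ x, ∑ j : Fin n, (f^[(j:ℕ)] ⁻¹' U).indicator (fun _ => (1:ℝ≥0∞)) x ∂η = n * η U := by
    rw [lintegral_finsetSum _ (fun j _ => measurable_const.indicator (hm (j : Fin n)))]
    simp [lintegral_indicator, hm, (hf.iterate _).measure_preimage hU.nullMeasurableSet]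
  have hpos : ENNReal.ofReal (β * n) ≠ 0 := by
    have : (0:ℝ) < n := by exact_mod_cast hn
    simp; positivity
  have h1 := meas_ge_le_lintegral_div (μ := η)
    (f := fun x => ∑ j : Fin n, (f^[(j:ℕ)] ⁻¹' U).indicator (fun _ => (1:ℝ≥0∞)) x)
    (Finset.measurable_sum _ (fun j _ => measurable_const.indicator (hm (j : Fin n)))).aemeasurable
    hpos ENNReal.ofReal_ne_top
  rw [hint] at h1
  refine le_trans (measure_mono ?_) (h1.trans ?_)
  · intro x hx
    simp only [mem_ofPred_eq, indicator_apply, mem_preimage, Finset.sum_boole] at hx ⊢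
    rw [← ENNReal.ofReal_natCast]
    exact ENNReal.ofReal_le_ofReal hx
  · apply ENNReal.div_le_of_le_mul
    rw [ENNReal.ofReal_mul hβ.le, ENNReal.ofReal_natCast]
    calc (n:ℝ≥0∞) * η U ≤ n * (ENNReal.ofReal β * d) := by gcongr
      _ = _ := by ring

lemma aux_isOpen_dynBall {M : Type*} [MetricSpace M] (f : M → M) (hf : Continuous f)
    (x : M) (n : ℕ) (ε : ℝ) : IsOpen (dynBall f x n ε) := by
  have : dynBall f x n ε = ⋂ j ∈ Finset.range (n+1), {y | dist (f^[j] x) (f^[j] y) < ε} := by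
    ext y; simp [dynBall]
  rw [this]
  exact isOpen_biInter_finset fun j _ =>
    isOpen_lt (continuous_const.dist (hf.iterate j)) continuous_const

open Classical in
lemma aux_count {M : Type*} [MetricSpace M] [MeasurableSpace M] [BorelSpace M]
    (f : M → M) (hf : Continuous f) (μ : Measure M) [IsProbabilityMeasure μ]
    (S A : Set M) (n : ℕ) (ε : ℝ) {α : Type} [Fintype α] (name : M → α)
    (R : α → α → Prop) (Hb p : ℝ) (hp : 0 ≤ p)
    (hR : ∀ w, ((Finset.univ.filter fun v => R v w).card : ℝ) ≤ Hb)
    (hε : 0 < ε)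
    (hAR : ∀ x ∈ A, ∀ y ∈ A, y ∈ dynBall f x n (2 * ε) → R (name y) (name x))
    (hA : ∀ x ∈ A, dynBall f x n ε ⊆ S ∧ ∃ m, n ≤ m ∧ p ≤ μ.real (dynBall f x m ε)) :
    ((Finset.univ.filter fun w => ∃ x ∈ A, name x = w).card : ℝ) * p ≤ Hb * μ.real S := by
  set W := Finset.univ.filter fun w => ∃ x ∈ A, name x = w with hW
  have hrep : ∀ w : α, ∃ x : M, w ∈ W → x ∈ A ∧ name x = w := by
    intro w
    by_cases hw : w ∈ W
    · obtain ⟨x, hx⟩ := (Finset.mem_filter.1 hw).2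
      exact ⟨x, fun _ => hx⟩
    · by_cases hM : Nonempty M
      · exact ⟨hM.some, fun h => (hw h).elim⟩
      · exfalso
        obtain ⟨x⟩ : Nonempty M := by
          by_contra h
          rw [not_nonempty_iff] at h
          have : μ univ = 0 := by rw [Set.eq_empty_of_isEmpty univ]; simp
          simp at this
        exact hM ⟨x⟩
  choose rep hrep using hrep
  let sep : Finset α → Prop := fun E => ∀ a ∈ E, ∀ b ∈ E, a ≠ b → rep b ∉ dynBall f (rep a) n (2*ε)
  have hsymm : ∀ x y, y ∈ dynBall f x n (2*ε) → x ∈ dynBall f y n (2*ε) := by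
    intro x y h j hj; rw [dist_comm]; exact h j hj
  obtain ⟨E, hE, hmax⟩ := Finset.exists_max_image (W.powerset.filter sep) Finset.card
    ⟨∅, by simp [sep]⟩
  have hEW : E ⊆ W := Finset.mem_powerset.1 (Finset.mem_filter.1 hE).1
  have hEs : sep E := (Finset.mem_filter.1 hE).2
  have hcov : ∀ w ∈ W, ∃ e ∈ E, rep w ∈ dynBall f (rep e) n (2*ε) := by
    intro w hw
    by_contra hcon
    push Not at hcon
    have hwE : w ∉ E := by
      intro h
      refine hcon w h ?_
      intro j _; simp; linarith
    have hs : sep (insert w E) := by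
      intro a ha b hb hab
      rcases Finset.mem_insert.1 ha with rfl | ha
      · rcases Finset.mem_insert.1 hb with rfl | hb
        · exact (hab rfl).elim
        · exact fun h => hcon b hb (hsymm _ _ h)
      · rcases Finset.mem_insert.1 hb with hb' | hb
        · rw [hb']; exact hcon a ha
        · exact hEs a ha b hb hab
    have := hmax (insert w E) (by
      rw [Finset.mem_filter, Finset.mem_powerset]
      exact ⟨Finset.insert_subset hw hEW, hs⟩)
    rw [Finset.card_insert_of_notMem hwE] at this
    omega
  have hWcard : (W.card : ℝ) ≤ E.card * Hb := by
    have hsub : W ⊆ E.biUnion fun e => Finset.univ.filter fun v => R v e := by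
      intro w hw
      obtain ⟨e, he, hwe⟩ := hcov w hw
      rw [Finset.mem_biUnion]
      refine ⟨e, he, ?_⟩
      rw [Finset.mem_filter]
      refine ⟨Finset.mem_univ _, ?_⟩
      have h1 := hrep w hw
      have h2 := hrep e (hEW he)
      have := hAR _ h2.1 _ h1.1 hwe
      rwa [h1.2, h2.2] at this
    have h1 : (W.card : ℝ) ≤ ∑ e ∈ E, ((Finset.univ.filter fun v => R v e).card : ℝ) := by
      exact_mod_cast (Finset.card_le_card hsub).trans Finset.card_biUnion_le
    refine h1.trans ((Finset.sum_le_sum fun e _ => hR e).trans ?_)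
    simp
  have hm : ∀ e : α, ∃ m, e ∈ E → n ≤ m ∧ p ≤ μ.real (dynBall f (rep e) m ε) := by
    intro e
    by_cases he : e ∈ E
    · obtain ⟨m, hm⟩ := (hA _ (hrep e (hEW he)).1).2
      exact ⟨m, fun _ => hm⟩
    · exact ⟨0, fun h => (he h).elim⟩
  choose m hm using hm
  have hEp : (E.card : ℝ) * p ≤ μ.real S := by
    have hsubn : ∀ e ∈ E, dynBall f (rep e) (m e) ε ⊆ dynBall f (rep e) n ε := by
      intro e he y hy j hj
      exact hy j (hj.trans (hm e he).1)
    have hdisj : (E : Set α).PairwiseDisjoint fun e => dynBall f (rep e) (m e) ε := by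
      intro a ha b hb hab
      rw [Function.onFun, Set.disjoint_left]
      intro z hz1 hz2
      refine hEs a ha b hb hab fun j hj => ?_
      have h1 := hsubn a ha hz1 j hj
      have h2 := hsubn b hb hz2 j hj
      have := dist_triangle_right (f^[j] (rep a)) (f^[j] (rep b)) (f^[j] z)
      linarith
    calc (E.card : ℝ) * p = ∑ e ∈ E, p := by simp
      _ ≤ ∑ e ∈ E, μ.real (dynBall f (rep e) (m e) ε) := Finset.sum_le_sum fun e he => (hm e he).2
      _ = μ.real (⋃ e ∈ E, dynBall f (rep e) (m e) ε) := by
        rw [measureReal_biUnion_finset hdisj]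
        intro e _
        exact (aux_isOpen_dynBall f hf _ _ _).measurableSet
      _ ≤ μ.real S := by
        exact measureReal_mono (iUnion₂_subset fun e he => (hsubn e he).trans (hA _ (hrep e (hEW he)).1).1)
  have hHb : 0 ≤ Hb ∨ E = ∅ := by
    rcases E.eq_empty_or_nonempty with h | ⟨e, _⟩
    · exact Or.inr h
    · exact Or.inl (le_trans (Nat.cast_nonneg _) (hR e))
  rcases hHb with h | h
  · calc (W.card:ℝ) * p ≤ E.card * Hb * p := by gcongr
      _ = Hb * (E.card * p) := by ring
      _ ≤ _ := by gcongr
  · have hW0 : W = ∅ := by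
      rw [Finset.eq_empty_iff_forall_notMem]
      intro w hw
      obtain ⟨e, he, _⟩ := hcov w hw
      simp [h] at he
    by_cases hα : Nonempty α
    · have : 0 ≤ Hb := le_trans (Nat.cast_nonneg _) (hR hα.some)
      rw [hW0]; simp; positivity
    · exfalso
      have hMe : IsEmpty M := ⟨fun x => hα ⟨name x⟩⟩
      have : μ univ = 0 := by rw [Set.eq_empty_of_isEmpty univ]; simp
      simp at this



lemma aux_partEntropy_le {M : Type*} [MeasurableSpace M] (η : Measure M) [IsProbabilityMeasure η]
    {α : Type} [Fintype α] (name : M → α) (hname : ∀ w, MeasurableSet (name ⁻¹' {w}))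
    (A : Set M) (W : Finset α) (hAW : ∀ x ∈ A, name x ∈ W) (d : ℝ) (hd : d < 1)
    (hA : 1 - d ≤ η.real A) :
    0 < W.card ∧
    partEntropy η name ≤ Real.log W.card + d * Real.log (Fintype.card α) + 2 := by
  have hAne : A.Nonempty := by
    rw [Set.nonempty_iff_ne_empty]
    rintro rfl
    simp at hA; linarith
  have hWne : W.Nonempty := ⟨_, hAW _ hAne.some_mem⟩
  refine ⟨hWne.card_pos, ?_⟩
  refine aux_entropy (fun w => (η (name ⁻¹' {w})).toReal) (fun _ => ENNReal.toReal_nonneg) ?_ W hWne d ?_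
  · have := sum_measureReal_preimage_singleton (μ := η) (f := name) Finset.univ (fun w _ => hname w)
    simpa [Measure.real] using this
  · have := sum_measureReal_preimage_singleton (μ := η) (f := name) W (fun w _ => hname w)
    change _ ≤ ∑ w ∈ W, η.real (name ⁻¹' {w})
    rw [this]
    exact hA.trans (measureReal_mono fun x hx => hAW x hx)

lemma aux_partEntropy_nonneg {M : Type*} [MeasurableSpace M] (η : Measure M) [IsProbabilityMeasure η]
    {α : Type} [Fintype α] (name : M → α) : 0 ≤ partEntropy η name := by
  refine Finset.sum_nonneg fun a _ => Real.negMulLog_nonneg ENNReal.toReal_nonneg ?_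
  exact measureReal_le_one

set_option maxHeartbeats 1000000 in
lemma aux_main
    {M : Type*} [MetricSpace M] [CompactSpace M] [MeasurableSpace M] [BorelSpace M]
    (f : M → M) (hf : Continuous f)
    (δ₀ : ℝ) (hδ₀ : 0 < δ₀) (G : Set M)
    (φ : M → ℝ) (hφ : Continuous φ) (Pr : ℝ)
    (hnl : ∀ x ∈ G, ∃ ni : ℕ → ℕ, StrictMono ni ∧
      (∀ i, IsGibbsTime f δ₀ x (ni i)) ∧
      (∀ m : ℕ, IsGibbsTime f δ₀ x m → ∃ i, ni i = m) ∧
      Filter.Tendsto (fun i : ℕ => ((ni (i + 1) : ℝ) - ni i) / ni i)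
        Filter.atTop (nhds 0))
    (μφ : Measure M) [IsProbabilityMeasure μφ]
    (hGibbs : ∀ ε : ℝ, 0 < ε → ε < δ₀ / 2 → ∃ K > 0,
      ∀ x ∈ G, ∀ n : ℕ, IsGibbsTime f δ₀ x n → ∀ y ∈ dynBall f x n ε,
        ENNReal.ofReal (K⁻¹ * Real.exp (birkhoff f φ n y - (n : ℝ) * Pr))
            ≤ μφ (dynBall f x n ε) ∧
          μφ (dynBall f x n ε)
            ≤ ENNReal.ofReal (K * Real.exp (birkhoff f φ n y - (n : ℝ) * Pr)))
    (ψ : M → ℝ) (hψ : Continuous ψ) (c : ℝ)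
    (η : Measure M) [IsProbabilityMeasure η] (hηerg : Ergodic f η)
    (hηG : η G = 1) (hηψ : c < ∫ x, ψ x ∂η) {k : ℕ} (P : M → Fin k) (hP : Measurable P)
    (τ : ℝ) (hτ : 0 < τ) :
    ∀ᶠ n : ℕ in atTop, entropyWrt f η P + ∫ x, φ x ∂η - Pr - 7 * τ ≤
        Real.log ((μφ {x : M | c * (n : ℝ) < birkhoff f ψ n x}).toReal) / n := by
  classical
  have hfp : MeasurePreserving f η η := hηerg.toMeasurePreserving
  obtain ⟨B, hB⟩ := isCompact_univ.exists_bound_of_continuousOn hφ.continuousOn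
  have hB0 : 0 ≤ B := by
    have : Nonempty M := by
      by_contra h
      rw [not_nonempty_iff] at h
      have : η univ = 0 := by rw [Set.eq_empty_of_isEmpty univ]; simp
      simp at this
    exact (norm_nonneg _).trans (hB this.some (mem_univ _))
  -- constants
  have hlogk : 0 ≤ Real.log k := Real.log_natCast_nonneg _
  obtain ⟨d, hd0, hd1, hdk⟩ : ∃ d : ℝ, 0 < d ∧ d < 1 ∧ d * Real.log k ≤ τ := by
    refine ⟨min (1/2) (τ / (Real.log k + 1)), by positivity, ?_, ?_⟩
    · exact lt_of_le_of_lt (min_le_left _ _) (by norm_num)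
    · calc _ ≤ τ / (Real.log k + 1) * (Real.log k + 1) := by
            gcongr
            · exact min_le_right _ _
            · linarith
        _ = τ := by field_simp
  obtain ⟨L, hL0, hLk⟩ : ∃ L : ℝ, 0 ≤ L ∧ k * Real.exp (-L) ≤ τ := by
    have h1 : Tendsto (fun L : ℝ => (k:ℝ) * Real.exp (-L)) atTop (𝓝 (k * 0)) :=
      (Real.tendsto_exp_neg_atTop_nhds_zero).const_mul _
    rw [mul_zero] at h1
    obtain ⟨L, hL, hL2⟩ := ((h1.eventually (gt_mem_nhds hτ)).and (eventually_ge_atTop 0)).exists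
    exact ⟨L, hL2, hL.le⟩
  obtain ⟨β, hβ0, hβL⟩ : ∃ β : ℝ, 0 < β ∧ L * (2 * β) ≤ τ := by
    refine ⟨τ / (2 * (L + 1)), by positivity, ?_⟩
    have h1 : L * (2 * (τ / (2 * (L + 1)))) = τ * (L / (L + 1)) := by field_simp
    rw [h1]
    have : L / (L + 1) ≤ 1 := by rw [div_le_one (by linarith)]; linarith
    nlinarith
  obtain ⟨δ, hδ, hδB⟩ : ∃ δ : ℝ, 0 < δ ∧ δ * (B + |Pr|) ≤ τ := by
    have hp := abs_nonneg Pr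
    refine ⟨τ / (B + |Pr| + 1), by positivity, ?_⟩
    rw [div_mul_eq_mul_div, div_le_iff₀ (by positivity)]
    nlinarith
  set I := ∫ x, φ x ∂η with hI
  set t := ((∫ x, ψ x ∂η) - c) / 2 with ht
  have ht0 : 0 < t := by rw [ht]; linarith
  -- partition approximation
  obtain ⟨εP, hεP, U, hU, hηU, hsame⟩ := aux_compact η P hP
    (ENNReal.ofReal β * ENNReal.ofReal (d/4)) (by
      rw [← ENNReal.ofReal_mul hβ0.le]; exact ENNReal.ofReal_pos.2 (by positivity))
  obtain ⟨εψ, hεψ, hψu⟩ := Metric.uniformContinuous_iff.1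
    (CompactSpace.uniformContinuous_of_continuous hψ) t ht0
  obtain ⟨ε, hε0, hε1, hε2, hε3⟩ : ∃ ε : ℝ, 0 < ε ∧ ε < δ₀ / 2 ∧ 2 * ε ≤ εP ∧ ε ≤ εψ := by
    refine ⟨min (δ₀/4) (min (εP/2) εψ), by positivity, ?_, ?_, ?_⟩
    · exact lt_of_le_of_lt (min_le_left _ _) (by linarith)
    · have := (min_le_right (δ₀/4) (min (εP/2) εψ)).trans (min_le_left _ _)
      linarith
    · exact (min_le_right _ _).trans (min_le_right _ _)
  obtain ⟨K, hK, hKG⟩ := hGibbs ε hε0 hε1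
  -- good set
  set D : ℕ → Set M := fun N => {x | x ∈ G ∧ ∀ n ≥ N, ∃ m, n ≤ m ∧ IsGibbsTime f δ₀ x m ∧
    (m : ℝ) ≤ (1 + δ) * n} with hD
  have hDmono : Monotone D := by
    intro a b hab x hx
    exact ⟨hx.1, fun n hn => hx.2 n (hab.trans hn)⟩
  have hDun : G ⊆ ⋃ N, D N := by
    intro x hx
    obtain ⟨ni, h1, h2, -, h4⟩ := hnl x hx
    obtain ⟨N, hN⟩ := aux_nonlacunar (Q := IsGibbsTime f δ₀ x) ni h1 h2 h4 δ hδ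
    exact mem_iUnion.2 ⟨N, hx, hN⟩
  have hDlim : Tendsto (fun N => η.real (D N)) atTop (𝓝 1) := by
    have h1 := tendsto_measure_iUnion_atTop (μ := η) hDmono
    have h2 : η (⋃ N, D N) = 1 := le_antisymm prob_le_one (hηG ▸ measure_mono hDun)
    rw [h2] at h1
    exact (ENNReal.tendsto_toReal ENNReal.one_ne_top).comp h1
  obtain ⟨N, hN⟩ := (hDlim.eventually (lt_mem_nhds (show 1 - d/4 < 1 by linarith))).exists
  have hψlim := aux_meanErgodic f η hηerg ψ hψ t ht0
  have hφlim := aux_meanErgodic f η hηerg φ hφ τ hτ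
  have hd4 : 0 < ENNReal.ofReal (d/4) := ENNReal.ofReal_pos.2 (by positivity)
  have hbdd : atTop.IsBoundedUnder (· ≥ ·) (fun n : ℕ =>
      partEntropy η (fun x => fun j : Fin n => P (f^[(j : ℕ)] x)) / n) := by
    refine isBoundedUnder_of ⟨0, fun n => ?_⟩
    exact div_nonneg (aux_partEntropy_nonneg _ _) (Nat.cast_nonneg _)
  have hent := eventually_lt_of_lt_liminf
    (show entropyWrt f η P - τ < Filter.atTop.liminf _ from sub_lt_self _ hτ) hbdd
  have hlarge : ∀ᶠ n : ℕ in atTop, (Real.log K + 2) ≤ τ * n := by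
    have := (tendsto_natCast_atTop_atTop (R := ℝ)).const_mul_atTop hτ
    exact this.eventually_ge_atTop _
  filter_upwards [hent, hlarge, hψlim.eventually (gt_mem_nhds hd4),
    hφlim.eventually (gt_mem_nhds hd4), eventually_ge_atTop N, eventually_gt_atTop 0] with
    n hn1 hn2 hn3 hn4 hn5 hn6
  have hnpos : (0:ℝ) < n := by exact_mod_cast hn6
  set B1 := {x | birkhoff f ψ n x ≤ n * ((∫ y, ψ y ∂η) - t)} with hB1
  set B2 := {x | birkhoff f φ n x ≤ n * (I - τ)} with hB2
  set B3 := {x | β * n ≤ ((Finset.univ.filter fun j : Fin n => f^[(j : ℕ)] x ∈ U).card : ℝ)} with hB3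
  have hn7 : η B3 ≤ ENNReal.ofReal (d/4) := aux_markov f η hfp U hU β hβ0 _ hηU n hn6
  set A := D N \ (B1 ∪ B2 ∪ B3) with hA
  have hηA : 1 - d ≤ η.real A := by
    have hsub : D N ⊆ A ∪ (B1 ∪ B2 ∪ B3) := by
      rw [hA, sdiff_union_self]; exact subset_union_left
    have e0 := measureReal_mono (μ := η) hsub
    have e1 := measureReal_union_le (μ := η) A (B1 ∪ B2 ∪ B3)
    have e2 := measureReal_union_le (μ := η) (B1 ∪ B2) B3
    have e3 := measureReal_union_le (μ := η) B1 B2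
    have f1 : η.real B1 ≤ d/4 := ENNReal.toReal_le_of_le_ofReal (by positivity) hn3.le
    have f2 : η.real B2 ≤ d/4 := ENNReal.toReal_le_of_le_ofReal (by positivity) hn4.le
    have f3 : η.real B3 ≤ d/4 := ENNReal.toReal_le_of_le_ofReal (by positivity) hn7
    linarith
  set name : M → (Fin n → Fin k) := fun x => fun j : Fin n => P (f^[(j : ℕ)] x) with hname
  have hnm : ∀ w, MeasurableSet (name ⁻¹' {w}) := by
    intro w
    have : Measurable name := measurable_pi_lambda _ fun j => hP.comp (hf.measurable.iterate _)
    exact this (measurableSet_singleton w)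
  set W := Finset.univ.filter fun w => ∃ x ∈ A, name x = w with hW
  obtain ⟨hWpos, hWent⟩ := aux_partEntropy_le η name hnm A W
    (fun x hx => by simp only [hW, Finset.mem_filter, Finset.mem_univ, true_and]; exact ⟨x, hx, rfl⟩)
    d hd1 hηA
  set S := {x : M | c * (n : ℝ) < birkhoff f ψ n x} with hS
  set q := n * (I - τ) - δ * n * B - n * Pr - δ * n * |Pr| with hq
  have hcount := aux_count f hf μφ S A n ε name (fun v w => (hammingDist v w : ℝ) ≤ 2 * β * n)
    (Real.exp (n * (k * Real.exp (-L)) + L * (2 * β * n))) (K⁻¹ * Real.exp q) (by positivity)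
    (fun w => by convert aux_hamming w L (2 * β * n) hL0) hε0 ?_ ?_
  · have hWR : (0:ℝ) < W.card := by exact_mod_cast hWpos
    have hSpos : 0 < μφ.real S := by
      by_contra h
      have h0 : μφ.real S = 0 := le_antisymm (not_lt.1 h) measureReal_nonneg
      rw [h0, mul_zero] at hcount
      have : 0 < (W.card : ℝ) * (K⁻¹ * Real.exp q) := by positivity
      linarith
    have hlog := Real.log_le_log (by positivity) hcount
    rw [Real.log_mul hWR.ne' (by positivity), Real.log_mul (by positivity) (Real.exp_ne_zero _),
      Real.log_mul (Real.exp_ne_zero _) hSpos.ne', Real.log_exp, Real.log_exp, Real.log_inv] at hlog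
    rw [lt_div_iff₀ hnpos] at hn1
    rw [Fintype.card_fun, Fintype.card_fin, Fintype.card_fin] at hWent
    push_cast at hWent
    rw [Real.log_pow] at hWent
    change _ ≤ Real.log (μφ.real S) / n
    rw [le_div_iff₀ hnpos]
    have g1 : n * (d * Real.log k) ≤ n * τ := by gcongr
    have g2 : n * (k * Real.exp (-L)) ≤ n * τ := by gcongr
    have g3 : n * (L * (2 * β)) ≤ n * τ := by gcongr
    have g4 : n * (δ * (B + |Pr|)) ≤ n * τ := by gcongr
    have hq' : q = n * (I - τ) - n * Pr - n * (δ * (B + |Pr|)) := by rw [hq]; ring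
    change _ < partEntropy η name at hn1
    linarith
  · -- names
    intro x hx y hy hxy
    have hx3 : ((Finset.univ.filter fun j : Fin n => f^[(j : ℕ)] x ∈ U).card : ℝ) < β * n := by
      by_contra h; exact hx.2 (Or.inr (not_lt.1 h))
    have hy3 : ((Finset.univ.filter fun j : Fin n => f^[(j : ℕ)] y ∈ U).card : ℝ) < β * n := by
      by_contra h; exact hy.2 (Or.inr (not_lt.1 h))
    have hsub : (Finset.univ.filter fun j : Fin n => name y j ≠ name x j) ⊆
        (Finset.univ.filter fun j : Fin n => f^[(j : ℕ)] x ∈ U) ∪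
        (Finset.univ.filter fun j : Fin n => f^[(j : ℕ)] y ∈ U) := by
      intro j hj
      simp only [Finset.mem_filter, Finset.mem_univ, true_and, Finset.mem_union] at hj ⊢
      by_contra hcon
      push Not at hcon
      refine hj (hsame _ _ hcon.1 hcon.2 ?_).symm
      exact lt_of_lt_of_le (hxy j j.2.le) hε2
    have hcard : (hammingDist (name y) (name x) : ℝ) ≤
        ((Finset.univ.filter fun j : Fin n => f^[(j : ℕ)] x ∈ U).card : ℝ) +
        ((Finset.univ.filter fun j : Fin n => f^[(j : ℕ)] y ∈ U).card : ℝ) := by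
      rw [hammingDist]
      exact_mod_cast (Finset.card_le_card hsub).trans (Finset.card_union_le _ _)
    linarith
  · intro x hx
    have hx1 : n * ((∫ y, ψ y ∂η) - t) < birkhoff f ψ n x := by
      by_contra h; exact hx.2 (Or.inl (Or.inl (not_lt.1 h)))
    have hx2 : n * (I - τ) < birkhoff f φ n x := by
      by_contra h; exact hx.2 (Or.inl (Or.inr (not_lt.1 h)))
    constructor
    · intro y hy
      change c * (n:ℝ) < birkhoff f ψ n y
      have hdiff : birkhoff f ψ n x - birkhoff f ψ n y ≤ n * t := by
        rw [birkhoff, birkhoff, ← Finset.sum_sub_distrib]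
        refine (Finset.sum_le_card_nsmul _ _ t ?_).trans (by simp)
        intro j hj
        have h1 := hψu (lt_of_lt_of_le (hy j (Finset.mem_range.1 hj).le) hε3)
        rw [Real.dist_eq] at h1
        exact (le_abs_self _).trans h1.le
      have : (∫ y, ψ y ∂η) = c + 2 * t := by rw [ht]; ring
      rw [this] at hx1
      have h2 : (n : ℝ) * (c + 2 * t - t) = c * n + n * t := by ring
      linarith
    · obtain ⟨m, hnm, hGm, hm⟩ := hx.1.2 n hn5
      refine ⟨m, hnm, ?_⟩
      have h1 := (hKG x hx.1.1 m hGm x (fun j _ => by simpa using hε0)).1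
      have h2 := ENNReal.toReal_mono (measure_ne_top _ _) h1
      rw [ENNReal.toReal_ofReal (by positivity)] at h2
      refine le_trans ?_ h2
      gcongr
      have hmn : (n:ℝ) ≤ m := by exact_mod_cast hnm
      have h3 : birkhoff f φ n x - birkhoff f φ m x ≤ (m - n) * B := by
        obtain ⟨l, rfl⟩ := Nat.exists_eq_add_of_le hnm
        rw [birkhoff, birkhoff, Finset.sum_range_add]
        have : ∑ i ∈ Finset.range l, (-φ (f^[n+i] x)) ≤ l * B := by
          refine (Finset.sum_le_card_nsmul _ _ B ?_).trans (by simp)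
          intro j _
          exact (neg_le_abs _).trans (hB _ (mem_univ _))
        rw [Finset.sum_neg_distrib] at this
        push_cast
        linarith
      have h4 : (m - n : ℝ) * B ≤ δ * n * B := by
        gcongr; linarith
      have h5 : (m - n : ℝ) * Pr ≤ δ * n * |Pr| := by
        refine (mul_le_mul_of_nonneg_left (le_abs_self Pr) (by linarith)).trans ?_
        gcongr; linarith
      rw [hq]
      linarith


/-- Large deviations lower bound over ergodic measures supported on `G`. -/
theorem largeDeviations_lowerBound_ergodic
    {M : Type*} [MetricSpace M] [CompactSpace M] [MeasurableSpace M] [BorelSpace M]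
    (f : M → M) (hf : IsLocalHomeomorph f) (hdense : DensePreorbits f)
    (δ₀ : ℝ) (hδ₀ : 0 < δ₀) (θ : ℝ) (hθ : 0 < θ)
    (G : Set M) (hG : G = gibbsSet f δ₀ θ)
    (φ : M → ℝ) (hφ : Continuous φ)
    (hH2 : BowenOnGibbs f φ δ₀ G)
    (hH3 : PressureLocatedOn f φ G)
    -- the sequence of Gibbs times of every point of `G` is non-lacunar
    (hnl : ∀ x ∈ G, ∃ ni : ℕ → ℕ, StrictMono ni ∧
      (∀ i, IsGibbsTime f δ₀ x (ni i)) ∧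
      (∀ m : ℕ, IsGibbsTime f δ₀ x m → ∃ i, ni i = m) ∧
      Filter.Tendsto (fun i : ℕ => ((ni (i + 1) : ℝ) - ni i) / ni i)
        Filter.atTop (nhds 0))
    -- `μφ` is the ergodic weak Gibbs measure (equilibrium state) of `(f,φ)`
    (μφ : Measure M) (hprob : IsProbabilityMeasure μφ) (herg : Ergodic f μφ)
    (hGibbs : ∀ ε : ℝ, 0 < ε → ε < δ₀ / 2 → ∃ K > 0,
      ∀ x ∈ G, ∀ n : ℕ, IsGibbsTime f δ₀ x n → ∀ y ∈ dynBall f x n ε,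
        ENNReal.ofReal (K⁻¹ * Real.exp (birkhoff f φ n y - (n : ℝ) * pres f φ))
            ≤ μφ (dynBall f x n ε) ∧
          μφ (dynBall f x n ε)
            ≤ ENNReal.ofReal (K * Real.exp (birkhoff f φ n y - (n : ℝ) * pres f φ)))
    (ψ : M → ℝ) (hψ : Continuous ψ) (c : ℝ)
    (η : Measure M) (hηprob : IsProbabilityMeasure η) (hηerg : Ergodic f η)
    (hηG : η G = 1) (hηψ : c < ∫ x, ψ x ∂η) :
    metricEntropy f η + ∫ x, φ x ∂η - pres f φ ≤
      Filter.atTop.liminf fun n : ℕ =>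
        Real.log ((μφ {x : M | c * (n : ℝ) < birkhoff f ψ n x}).toReal) / n := by

  have hf' : Continuous f := hf.continuous
  have hne : Nonempty M := by
    by_contra h
    rw [not_nonempty_iff] at h
    have : η univ = 0 := by rw [Set.eq_empty_of_isEmpty univ]; simp
    simp at this
  have hbd : atTop.IsBoundedUnder (· ≤ ·) (fun n : ℕ =>
      Real.log ((μφ {x : M | c * (n : ℝ) < birkhoff f ψ n x}).toReal) / n) := by
    refine isBoundedUnder_of ⟨0, fun n => ?_⟩
    exact div_nonpos_of_nonpos_of_nonneg
      (Real.log_nonpos ENNReal.toReal_nonneg measureReal_le_one) (Nat.cast_nonneg _)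
  have hcob := hbd.isCoboundedUnder_ge
  have key : metricEntropy f η ≤ (Filter.atTop.liminf fun n : ℕ =>
      Real.log ((μφ {x : M | c * (n : ℝ) < birkhoff f ψ n x}).toReal) / n)
      - ∫ x, φ x ∂η + pres f φ := by
    have : Nonempty (Σ k : ℕ, {P : M → Fin k // Measurable P}) :=
      ⟨⟨1, fun _ => 0, measurable_const⟩⟩
    refine ciSup_le fun p => ?_
    obtain ⟨k, P, hP⟩ := p
    refine le_of_forall_pos_le_add fun e he => ?_
    have h1 := aux_main f hf' δ₀ hδ₀ G φ hφ (pres f φ) hnl μφ hGibbs ψ hψ c η hηerg hηG hηψ P hP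
      (e / 7) (by positivity)
    have h2 := le_liminf_of_le hcob h1
    change entropyWrt f η P ≤ _
    linarith
  linarith

end PaperWG
end
end
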